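/- Let A be a separable unital C*-algebra and let H be a separable infinite-dimensional Hilbert space. Suppose that for every finite-dimensional irreducible unital representation ρ of A there exists a weakly mixing unital representation θ of A on a separable Hilbert space such that ρ ≺ θ. Then WM(A,H) is a dense Gδ subset of Rep(A,H) in the point-strong operator topology. -/

import Mathlib

open scoped InnerProductSpace

noncomputable section

/-- The space of unital representations of `A` on `H`, i.e. unital `*`-homomorphisms
`A → B(H)`. -/
abbrev CRep (A H : Type*) [CStarAlgebra A] [NormedAddCommGroup H]
    [InnerProductSpace ℂ H] [CompleteSpace H] : Type _ :=
  A →⋆ₐ[ℂ] (H →L[ℂ] H)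

/-- The point-strong operator topology on `CRep A H`: the topology of pointwise convergence
with `B(H)` carrying the strong operator topology (i.e. pointwise convergence on vectors). -/
instance CRep.instTopologicalSpace (A H : Type*) [CStarAlgebra A] [NormedAddCommGroup H]
    [InnerProductSpace ℂ H] [CompleteSpace H] : TopologicalSpace (CRep A H) :=
  TopologicalSpace.induced (fun π => (fun (a : A) (x : H) => π a x)) inferInstance

/-- A closed subspace `K` is invariant under a unital representation `π`. -/
def CRepInvariant {A H : Type*} [CStarAlgebra A] [NormedAddCommGroup H]
    [InnerProductSpace ℂ H] [CompleteSpace H]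
    (π : CRep A H) (K : Submodule ℂ H) : Prop :=
  ∀ a : A, ∀ x ∈ K, π a x ∈ K

/-- A unital representation is weakly mixing if it admits no nonzero finite-dimensional
closed invariant subspace. -/
def CRepWeaklyMixing {A H : Type*} [CStarAlgebra A] [NormedAddCommGroup H]
    [InnerProductSpace ℂ H] [CompleteSpace H]
    (π : CRep A H) : Prop :=
  ∀ K : Submodule ℂ H, IsClosed (K : Set H) → FiniteDimensional ℂ K →
    CRepInvariant π K → K = ⊥

/-- A unital representation is irreducible if its only closed invariant subspaces are `⊥`
and the whole space. -/
def CRepIrreducible {A H : Type*} [CStarAlgebra A] [NormedAddCommGroup H]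
    [InnerProductSpace ℂ H] [CompleteSpace H] (π : CRep A H) : Prop :=
  ∀ K : Submodule ℂ H, IsClosed (K : Set H) → (∀ a : A, ∀ x ∈ K, π a x ∈ K) →
    K = ⊥ ∨ K = ⊤

/-- The weak containment relation `π ≺ ρ`. -/
def CRepPrec {A H K : Type*} [CStarAlgebra A] [NormedAddCommGroup H]
    [InnerProductSpace ℂ H] [CompleteSpace H] [NormedAddCommGroup K]
    [InnerProductSpace ℂ K] [CompleteSpace K]
    (π : CRep A H) (ρ : CRep A K) : Prop :=
  ∀ (Ω : Finset A) (n : ℕ) (ξ : Fin n → H), Orthonormal ℂ ξ → ∀ ε : ℝ, 0 < ε →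
    ∃ ζ : Fin n → K, Orthonormal ℂ ζ ∧
      ∀ a ∈ Ω, ∀ i : Fin n, ‖⟪π a (ξ i), ξ i⟫_ℂ - ⟪ρ a (ζ i), ζ i⟫_ℂ‖ < ε

/-!
*Gδ.* A representation fails to be weakly mixing exactly when it commutes with some nonzero
finite-rank operator `∑ i, |fᵢ⟩⟨fᵢ|` whose functionals `fᵢ` lie in the unit ball of the dual of `H`.
Requiring moreover that `1 / (m + 1) ≤ |fⱼ x|` for a fixed vector `x` makes this a closed condition
on the representation, because the ball is weak-* compact and projections along compact factors are
closed maps. Letting `x` run through a dense sequence, countably many such sets cover the complement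
of the weakly mixing representations.

*Density.* On the orthogonal complement of all finite-dimensional invariant subspaces `π` is already
weakly mixing. Finitely many vectors of `H` can be moved slightly into the sum of that complement
and a finite-dimensional invariant subspace `E`, and `π` restricted to `E` is a direct sum of
irreducibles. If `ρ` is irreducible and `ρ ≺ θ`, then approximating the vector state of a cyclic
vector yields an operator that almost intertwines `ρ` and `θ` and almost preserves inner products;
its polar decomposition supplies an isometry nearby. So `π` on `E` may be exchanged for a weakly
mixing representation, and a unitary agreeing with the resulting isometry on a large
finite-dimensional subspace transports the result back to `H`.
-/

open TopologicalSpace Filter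
open scoped Topology

section Representations

variable {A H K : Type*} [CStarAlgebra A]
  [NormedAddCommGroup H] [InnerProductSpace ℂ H] [CompleteSpace H]
  [NormedAddCommGroup K] [InnerProductSpace ℂ K] [CompleteSpace K]

namespace CRep

theorem inner_apply_left (π : CRep A H) (a : A) (x y : H) :
    ⟪π a x, y⟫_ℂ = ⟪x, π (star a) y⟫_ℂ := by
  rw [map_star, ContinuousLinearMap.star_eq_adjoint, ContinuousLinearMap.adjoint_inner_right]

theorem inner_star_apply_left (π : CRep A H) (a : A) (x y : H) :
    ⟪π (star a) x, y⟫_ℂ = ⟪x, π a y⟫_ℂ := by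
  rw [inner_apply_left, star_star]

theorem inner_star_mul_apply (π : CRep A H) (a b : A) (x y : H) :
    ⟪π (star b * a) x, y⟫_ℂ = ⟪π a x, π b y⟫_ℂ := by
  rw [map_mul, ← inner_star_apply_left]
  rfl

theorem norm_apply_apply_le (π : CRep A H) (a : A) (x : H) : ‖π a x‖ ≤ ‖a‖ * ‖x‖ :=
  (π a).le_of_opNorm_le (NonUnitalStarAlgHom.norm_apply_le π a) x

theorem continuous_apply_apply (a : A) (x : H) : Continuous fun π : CRep A H => π a x := by
  have h : Continuous fun (π : CRep A H) (a : A) (x : H) => π a x := continuous_induced_dom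
  exact (continuous_apply x).comp ((continuous_apply a).comp h)

/-- The restriction of a representation to a closed invariant subspace. -/
def restrict (π : CRep A H) (M : Submodule ℂ H) [CompleteSpace M] (hM : CRepInvariant π M) :
    CRep A M where
  toFun a := ((π a).comp M.subtypeL).codRestrict M fun x => hM a x x.2
  map_one' := by ext; simp
  map_mul' a b := by ext x; exact DFunLike.congr_fun (map_mul π a b) (x : H)
  map_zero' := by ext; simp
  map_add' a b := by ext x; exact DFunLike.congr_fun (map_add π a b) (x : H)
  commutes' r := by ext; simp [Algebra.algebraMap_eq_smul_one]
  map_star' a := by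
    rw [ContinuousLinearMap.star_eq_adjoint, ContinuousLinearMap.eq_adjoint_iff]
    intro x y
    exact inner_star_apply_left π a x y

/-- The direct sum of two representations. -/
def prod (π : CRep A H) (ρ : CRep A K) : CRep A (WithLp 2 (H × K)) where
  toFun a := (WithLp.prodContinuousLinearEquiv 2 ℂ H K).symm.toContinuousLinearMap.comp
    (((π a).prodMap (ρ a)).comp (WithLp.prodContinuousLinearEquiv 2 ℂ H K).toContinuousLinearMap)
  map_one' := by ext x; apply WithLp.ofLp_injective; ext <;> simp
  map_mul' a b := by ext x; apply WithLp.ofLp_injective; ext <;> simp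
  map_zero' := by ext x; apply WithLp.ofLp_injective; ext <;> simp
  map_add' a b := by ext x; apply WithLp.ofLp_injective; ext <;> simp
  commutes' r := by
    ext x; apply WithLp.ofLp_injective; ext <;> simp [Algebra.algebraMap_eq_smul_one]
  map_star' a := by
    rw [ContinuousLinearMap.star_eq_adjoint, ContinuousLinearMap.eq_adjoint_iff]
    intro x y
    simp only [WithLp.prod_inner_apply]
    exact congrArg₂ (· + ·) (inner_star_apply_left π a _ _) (inner_star_apply_left ρ a _ _)

/-- The transport of a representation along a unitary. -/
def conj (π : CRep A H) (U : H ≃ₗᵢ[ℂ] K) : CRep A K :=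
  U.conjStarAlgEquiv.toStarAlgHom.comp π

@[simp]
theorem conj_apply (π : CRep A H) (U : H ≃ₗᵢ[ℂ] K) (a : A) (x : K) :
    π.conj U a x = U (π a (U.symm x)) := rfl

end CRep

namespace CRepInvariant

variable {π : CRep A H} {ρ : CRep A K} {M N : Submodule ℂ H}

theorem map {T : H →ₗ[ℂ] K} (hT : ∀ a x, T (π a x) = ρ a (T x)) (hM : CRepInvariant π M) :
    CRepInvariant ρ (M.map T) := by
  rintro a _ ⟨x, hx, rfl⟩
  exact ⟨π a x, hM a x hx, hT a x⟩

theorem sup (hM : CRepInvariant π M) (hN : CRepInvariant π N) : CRepInvariant π (M ⊔ N) := by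
  intro a x hx
  obtain ⟨y, hy, z, hz, rfl⟩ := Submodule.mem_sup.1 hx
  rw [map_add]
  exact Submodule.add_mem_sup (hM a y hy) (hN a z hz)

theorem sSup {S : Set (Submodule ℂ H)} (hS : ∀ M ∈ S, CRepInvariant π M) :
    CRepInvariant π (SupSet.sSup S) := by
  intro a
  change SupSet.sSup S ≤ (SupSet.sSup S).comap (π a : H →ₗ[ℂ] H)
  exact sSup_le fun M hM x hx => le_sSup hM (hS M hM a x hx)

theorem orthogonal (hM : CRepInvariant π M) : CRepInvariant π Mᗮ := by
  intro a x hx y hy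
  rw [← CRep.inner_star_apply_left]
  exact hx _ (hM _ y hy)

theorem starProjection_apply [M.HasOrthogonalProjection] (hM : CRepInvariant π M) (a : A)
    (x : H) : M.starProjection (π a x) = π a (M.starProjection x) := by
  refine Submodule.eq_starProjection_of_mem_orthogonal
    (hM a _ (M.starProjection_apply_mem x)) ?_
  rw [← map_sub]
  exact hM.orthogonal a _ (Submodule.sub_starProjection_mem_orthogonal x)

theorem conj_orthogonalDecomposition [CompleteSpace M] (hM : CRepInvariant π M) :
    π.conj M.orthogonalDecomposition =
      (π.restrict M hM).prod (π.restrict Mᗮ hM.orthogonal) := by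
  refine StarAlgHom.ext fun a => ContinuousLinearMap.ext fun x => ?_
  rw [CRep.conj_apply, ← LinearIsometryEquiv.eq_symm_apply,
    M.orthogonalDecomposition_symm_apply, M.orthogonalDecomposition_symm_apply, map_add]
  rfl

end CRepInvariant

namespace CRepWeaklyMixing

variable {π : CRep A H} {ρ : CRep A K}

theorem le_ker {M : Submodule ℂ H} {T : H →ₗ[ℂ] K} (hρ : CRepWeaklyMixing ρ)
    (hT : ∀ a x, T (π a x) = ρ a (T x)) [FiniteDimensional ℂ M] (hM : CRepInvariant π M) :
    M ≤ LinearMap.ker T := by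
  have h := hρ (M.map T) (Submodule.closed_of_finiteDimensional _) inferInstance (hM.map hT)
  exact LinearMap.le_ker_iff_map.2 h

theorem prod (hπ : CRepWeaklyMixing π) (hρ : CRepWeaklyMixing ρ) :
    CRepWeaklyMixing (π.prod ρ) := by
  intro M _ _ hM
  rw [eq_bot_iff]
  intro x hx
  have h1 := hπ.le_ker (T := (WithLp.fstL 2 ℂ H K : WithLp 2 (H × K) →ₗ[ℂ] H))
    (fun _ _ => rfl) hM hx
  have h2 := hρ.le_ker (T := (WithLp.sndL 2 ℂ H K : WithLp 2 (H × K) →ₗ[ℂ] K))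
    (fun _ _ => rfl) hM hx
  rw [Submodule.mem_bot]
  exact WithLp.ofLp_injective 2 (Prod.ext h1 h2)

theorem conj (hπ : CRepWeaklyMixing π) (U : H ≃ₗᵢ[ℂ] K) : CRepWeaklyMixing (π.conj U) := by
  intro M _ _ hM
  rw [eq_bot_iff]
  intro x hx
  have h := hπ.le_ker (T := (U.symm.toLinearEquiv : K →ₗ[ℂ] H)) (fun a x => by simp) hM hx
  simpa using h

theorem not_finiteDimensional [Nontrivial H] (hπ : CRepWeaklyMixing π) :
    ¬ FiniteDimensional ℂ H := by
  intro h
  exact top_ne_bot (hπ ⊤ isClosed_univ inferInstance fun _ _ _ => Submodule.mem_top)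

end CRepWeaklyMixing

namespace CRepIrreducible

theorem surjective_apply [FiniteDimensional ℂ H] {ρ : CRep A H}
    (hρ : CRepIrreducible ρ) {ξ : H} (hξ : ξ ≠ 0) : Function.Surjective fun a => ρ a ξ := by
  let orbit : A →ₗ[ℂ] H :=
    { toFun := fun a => ρ a ξ
      map_add' := fun a b => by simp
      map_smul' := fun c a => by simp }
  have h := hρ (LinearMap.range orbit) (Submodule.closed_of_finiteDimensional _) (by
    rintro a _ ⟨b, rfl⟩
    exact ⟨a * b, by simp [orbit]⟩)
  have hmem : ξ ∈ LinearMap.range orbit := ⟨1, by simp [orbit]⟩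
  rcases h with h | h
  · rw [h, Submodule.mem_bot] at hmem
    exact absurd hmem hξ
  · exact LinearMap.range_eq_top.1 h

theorem conj {ρ : CRep A H} (hρ : CRepIrreducible ρ) (U : H ≃ₗᵢ[ℂ] K) :
    CRepIrreducible (ρ.conj U) := by
  intro M hM hinv
  have h := hρ (M.comap (U.toLinearEquiv : H →ₗ[ℂ] K)) (hM.preimage U.continuous) (by
    intro a x hx
    have := hinv a _ hx
    simpa using this)
  have hmap : (M.comap (U.toLinearEquiv : H →ₗ[ℂ] K)).map (U.toLinearEquiv : H →ₗ[ℂ] K) = M :=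
    Submodule.map_comap_eq_of_surjective U.surjective M
  refine h.imp (fun h => ?_) (fun h => ?_)
  · rw [← hmap, h, Submodule.map_bot]
  · rw [← hmap, h, Submodule.map_top, LinearMap.range_eq_top]
    exact U.surjective

end CRepIrreducible

end Representations

namespace CRep

variable {A H : Type*} [CStarAlgebra A]
  [NormedAddCommGroup H] [InnerProductSpace ℂ H] [CompleteSpace H]

theorem lipschitzWith (π : CRep A H) (a : A) : LipschitzWith ‖a‖₊ (π a) :=
  (π a).lipschitz.weaken (NonUnitalStarAlgHom.norm_apply_le π a)

theorem tendsto_iff_of_dense {ι : Type*} {l : Filter ι} {σ : ι → CRep A H} {π : CRep A H}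
    {s : Set H} (hs : Dense s) :
    Tendsto σ l (𝓝 π) ↔ ∀ a, ∀ x ∈ s, Tendsto (fun i => σ i a x) l (𝓝 (π a x)) := by
  rw [nhds_induced, tendsto_comap_iff, tendsto_pi_nhds]
  refine forall_congr' fun a => ?_
  rw [tendsto_pi_nhds]
  refine ⟨fun h x _ => h x, fun h x => ?_⟩
  have hequi : Equicontinuous fun i x => σ i a x :=
    (LipschitzWith.uniformEquicontinuous _ ‖a‖₊ fun i => (σ i).lipschitzWith a).equicontinuous
  exact (hequi.isClosed_setOfPred_tendsto (π a).continuous).closure_subset_iff.2 h (hs x)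

theorem mem_closure_of_dense_approx {S : Set (CRep A H)} {π : CRep A H} {s : Set H}
    (hs : Dense s)
    (h : ∀ (Ω : Finset A) (F : Finset H), (F : Set H) ⊆ s → ∀ ε > 0,
      ∃ σ ∈ S, ∀ a ∈ Ω, ∀ x ∈ F, ‖σ a x - π a x‖ < ε) :
    π ∈ closure S := by
  classical
  choose σ hσS hσ using fun i : Finset A × Finset s × ℕ =>
    h i.1 (i.2.1.map (Function.Embedding.subtype _)) (by simp) (1 / ((i.2.2 : ℝ) + 1))
      Nat.one_div_pos_of_nat
  refine mem_closure_of_tendsto ((tendsto_iff_of_dense (l := atTop) hs).2 fun a x hx => ?_)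
    (Eventually.of_forall hσS)
  refine Metric.tendsto_atTop.2 fun ε hε => ?_
  obtain ⟨n, hn⟩ := exists_nat_one_div_lt hε
  refine ⟨({a}, {⟨x, hx⟩}, n), fun i ⟨ha, hxi, hni⟩ => ?_⟩
  have hni : (n : ℝ) ≤ i.2.2 := by exact_mod_cast hni
  rw [dist_eq_norm]
  calc ‖σ i a x - π a x‖ < 1 / ((i.2.2 : ℝ) + 1) :=
        hσ i a (ha (by simp)) x (Finset.mem_map.2 ⟨⟨x, hx⟩, hxi (by simp), rfl⟩)
    _ ≤ 1 / ((n : ℝ) + 1) := by gcongr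
    _ < ε := hn

end CRep

section GDelta

/-- The unit ball of the dual of `E`, with the weak-* topology. -/
abbrev weakDualUnitBall (𝕜 E : Type*) [NontriviallyNormedField 𝕜] [SeminormedAddCommGroup E]
    [NormedSpace 𝕜 E] : Set (WeakDual 𝕜 E) :=
  WeakDual.toStrongDual ⁻¹' Metric.closedBall 0 1

theorem continuous_weakDualUnitBall_eval {𝕜 E : Type*} [NontriviallyNormedField 𝕜]
    [SeminormedAddCommGroup E] [NormedSpace 𝕜 E] :
    Continuous fun p : weakDualUnitBall 𝕜 E × E => (p.1 : WeakDual 𝕜 E) p.2 := by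
  refine continuous_prod_of_continuous_lipschitzWith' _ 1 (fun f => ?_) fun x =>
    (WeakDual.eval_continuous x).comp continuous_subtype_val
  exact (WeakDual.toStrongDual (f : WeakDual 𝕜 E)).lipschitz.weaken
    (mem_closedBall_zero_iff.1 f.2)

instance (𝕜 E : Type*) [NontriviallyNormedField 𝕜] [ProperSpace 𝕜] [SeminormedAddCommGroup E]
    [NormedSpace 𝕜 E] : CompactSpace (weakDualUnitBall 𝕜 E) :=
  isCompact_iff_compactSpace.1 (WeakDual.isCompact_closedBall 0 1)

section FrameOperator

variable {𝕜 H ι : Type*} [RCLike 𝕜] [Fintype ι]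
  [NormedAddCommGroup H] [InnerProductSpace 𝕜 H] [CompleteSpace H]

/-- The positive finite-rank operator `∑ i, |fᵢ⟩⟨fᵢ|` determined by finitely many functionals.
When the `fᵢ` come from an orthonormal basis of a subspace, it is the projection onto it. -/
def frameOperator (f : ι → StrongDual 𝕜 H) : H →L[𝕜] H :=
  ∑ i, (f i).smulRight ((InnerProductSpace.toDual 𝕜 H).symm (f i))

theorem inner_frameOperator_right (f : ι → StrongDual 𝕜 H) (x y : H) :
    ⟪y, frameOperator f x⟫_𝕜 = ∑ i, f i x * star (f i y) := by
  have hconj : ∀ i, star (f i y) = ⟪y, (InnerProductSpace.toDual 𝕜 H).symm (f i)⟫_𝕜 := fun i => by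
    rw [← inner_conj_symm, InnerProductSpace.toDual_symm_apply, starRingEnd_apply]
  simp only [frameOperator, sum_apply, ContinuousLinearMap.smulRight_apply, inner_sum,
    inner_smul_right, hconj]

theorem frameOperator_toDual_orthonormalBasis {M : Submodule 𝕜 H} [FiniteDimensional 𝕜 M]
    (b : OrthonormalBasis ι 𝕜 M) :
    frameOperator (fun i => InnerProductSpace.toDual 𝕜 H (b i)) = M.starProjection := by
  ext x
  simp [frameOperator, b.starProjection_eq_sum_rankOne]

theorem eq_zero_of_frameOperator_eq_zero {f : ι → StrongDual 𝕜 H} (hf : frameOperator f = 0)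
    (i : ι) : f i = 0 := by
  ext x
  have hsum : ∑ j, ‖f j x‖ ^ 2 = 0 := by
    have h := inner_frameOperator_right f x x
    simp only [hf, zero_apply, inner_zero_right, RCLike.star_def,
      RCLike.mul_conj] at h
    exact_mod_cast h.symm
  rw [Finset.sum_eq_zero_iff_of_nonneg fun j _ => sq_nonneg _] at hsum
  simpa using hsum i (Finset.mem_univ i)

instance (f : ι → StrongDual 𝕜 H) :
    FiniteDimensional 𝕜 (LinearMap.range (frameOperator f : H →ₗ[𝕜] H)) := by
  let e i := (InnerProductSpace.toDual 𝕜 H).symm (f i)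
  have := FiniteDimensional.span_of_finite 𝕜 (Set.finite_range e)
  refine Submodule.finiteDimensional_of_le (S₂ := Submodule.span 𝕜 (Set.range e)) ?_
  rintro _ ⟨x, rfl⟩
  simp only [frameOperator, ContinuousLinearMap.coe_coe, sum_apply,
    ContinuousLinearMap.smulRight_apply]
  exact Submodule.sum_mem _ fun i _ =>
    Submodule.smul_mem _ _ (Submodule.subset_span (Set.mem_range_self i))

end FrameOperator

variable {A H : Type*} [CStarAlgebra A]
  [NormedAddCommGroup H] [InnerProductSpace ℂ H] [CompleteSpace H] {π : CRep A H}

theorem CRepWeaklyMixing.eq_zero_of_commute (hπ : CRepWeaklyMixing π) {T : H →L[ℂ] H}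
    [FiniteDimensional ℂ (LinearMap.range (T : H →ₗ[ℂ] H))] (hT : ∀ a, Commute (π a) T) :
    T = 0 := by
  have hrange : CRepInvariant π (LinearMap.range (T : H →ₗ[ℂ] H)) := by
    rintro a _ ⟨x, rfl⟩
    exact ⟨π a x, (DFunLike.congr_fun (hT a).eq x).symm⟩
  have hbot := hπ _ (Submodule.closed_of_finiteDimensional _) inferInstance hrange
  exact ContinuousLinearMap.coe_injective (LinearMap.range_eq_bot.1 hbot)

theorem CRepInvariant.commute_starProjection {M : Submodule ℂ H} [M.HasOrthogonalProjection]
    (hM : CRepInvariant π M) (a : A) : Commute (π a) M.starProjection :=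
  ContinuousLinearMap.ext fun x => (hM.starProjection_apply a x).symm

theorem crepWeaklyMixing_iff_frameOperator :
    CRepWeaklyMixing π ↔ ∀ (n : ℕ) (f : Fin n → weakDualUnitBall ℂ H),
      (∀ a, Commute (π a) (frameOperator fun i => WeakDual.toStrongDual (f i : WeakDual ℂ H))) →
        ∀ i x, (f i : WeakDual ℂ H) x = 0 := by
  refine ⟨fun hπ n f hf i x => ?_, fun h M _ _ hM => ?_⟩
  · exact DFunLike.congr_fun (eq_zero_of_frameOperator_eq_zero (hπ.eq_zero_of_commute hf) i) x
  let b := stdOrthonormalBasis ℂ M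
  let f i : weakDualUnitBall ℂ H :=
    ⟨StrongDual.toWeakDual (InnerProductSpace.toDual ℂ H (b i)), by
      simpa using show ‖(b i : H)‖ ≤ 1 from (b.norm_eq_one i).le⟩
  have hf : ∀ a, Commute (π a)
      (frameOperator fun i => WeakDual.toStrongDual (f i : WeakDual ℂ H)) := fun a => by
    have h := hM.commute_starProjection a
    rwa [← frameOperator_toDual_orthonormalBasis b] at h
  have hb : ∀ i, (b i : H) = 0 := fun i => inner_self_eq_zero.1 (h _ f hf i (b i))
  refine (Submodule.eq_bot_iff M).2 fun x hx => ?_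
  rw [← M.starProjection_eq_self_iff.2 hx, ← frameOperator_toDual_orthonormalBasis b]
  simp [frameOperator, hb]

theorem CRep.commute_frameOperator_iff {ι : Type*} [Fintype ι] {f : ι → StrongDual ℂ H} {a : A} :
    Commute (π a) (frameOperator f) ↔ ∀ x y, ∑ i, f i (π a x) * star (f i y) =
      ∑ i, f i x * star (f i (π (star a) y)) := by
  simp only [← inner_frameOperator_right, inner_star_apply_left]
  refine ⟨fun h x y => ?_, fun h => ContinuousLinearMap.ext fun x => ext_inner_left ℂ fun y =>
    (h x y).symm⟩
  exact congrArg (inner ℂ y) (DFunLike.congr_fun h.eq x).symm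

theorem CRep.isClosed_setOf_exists_commute_frameOperator {ι : Type*} [Fintype ι] (j : ι) (x₀ : H)
    (r : ℝ) :
    IsClosed {π : CRep A H | ∃ f : ι → weakDualUnitBall ℂ H,
      (∀ a, Commute (π a) (frameOperator fun i => WeakDual.toStrongDual (f i : WeakDual ℂ H))) ∧
      r ≤ ‖(f j : WeakDual ℂ H) x₀‖} := by
  have hcont : ∀ (i : ι) {g : CRep A H → H}, Continuous g →
      Continuous fun p : CRep A H × (ι → weakDualUnitBall ℂ H) =>
        (p.2 i : WeakDual ℂ H) (g p.1) := fun i g hg =>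
    continuous_weakDualUnitBall_eval.comp
      (f := fun p : CRep A H × (ι → weakDualUnitBall ℂ H) => (p.2 i, g p.1))
      (((continuous_apply i).comp continuous_snd).prodMk (hg.comp continuous_fst))
  have hclosed : IsClosed {p : CRep A H × (ι → weakDualUnitBall ℂ H) |
      (∀ a, Commute (p.1 a)
        (frameOperator fun i => WeakDual.toStrongDual (p.2 i : WeakDual ℂ H))) ∧
      r ≤ ‖(p.2 j : WeakDual ℂ H) x₀‖} := by
    simp only [commute_frameOperator_iff, Set.ofPred_and, Set.ofPred_forall]
    refine .inter (isClosed_iInter fun a => isClosed_iInter fun x => isClosed_iInter fun y => ?_)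
      (isClosed_le continuous_const (hcont j continuous_const).norm)
    exact isClosed_eq
      (continuous_finsetSum _ fun i _ =>
        (hcont i (continuous_apply_apply a x)).mul (hcont i continuous_const).star)
      (continuous_finsetSum _ fun i _ =>
        (hcont i continuous_const).mul (hcont i (continuous_apply_apply (star a) y)).star)
  convert isClosedMap_fst_of_compactSpace _ hclosed
  ext π
  simp

theorem isGδ_setOf_crepWeaklyMixing [SeparableSpace H] :
    IsGδ {π : CRep A H | CRepWeaklyMixing π} := by
  have hset : {π : CRep A H | CRepWeaklyMixing π} =
      ⋂ p : (Σ n : ℕ, Fin n) × ℕ × ℕ, {π : CRep A H | ∃ f : Fin p.1.1 → weakDualUnitBall ℂ H,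
        (∀ a, Commute (π a)
          (frameOperator fun i => WeakDual.toStrongDual (f i : WeakDual ℂ H))) ∧
        1 / ((p.2.2 : ℝ) + 1) ≤ ‖(f p.1.2 : WeakDual ℂ H) (denseSeq H p.2.1)‖}ᶜ := by
    ext π
    simp only [Set.mem_ofPred_eq, Set.mem_iInter, Set.mem_compl_iff, not_exists, not_and, not_le]
    rw [crepWeaklyMixing_iff_frameOperator]
    refine ⟨fun h ⟨⟨n, j⟩, k, m⟩ f hf => ?_, fun h n f hf j => ?_⟩
    · simpa [h n f hf j] using Nat.one_div_pos_of_nat (α := ℝ) (n := m)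
    refine congrFun (DenseRange.equalizer (denseRange_denseSeq H)
      (WeakDual.toStrongDual (f j : WeakDual ℂ H)).continuous continuous_zero (funext fun k => ?_))
    by_contra hk
    obtain ⟨m, hm⟩ := exists_nat_one_div_lt (norm_pos_iff.2 hk)
    exact (h ⟨⟨n, j⟩, k, m⟩ f hf).not_gt hm
  rw [hset]
  exact .iInter_of_isOpen fun p =>
    (CRep.isClosed_setOf_exists_commute_frameOperator _ _ _).isOpen_compl

end GDelta

section NearIsometry

theorem norm_sub_apply_le_of_isPositive {𝕜 E : Type*} [RCLike 𝕜] [NormedAddCommGroup E]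
    [InnerProductSpace 𝕜 E] {Q : E →L[𝕜] E} (hQ : Q.IsPositive) (x : E) :
    ‖x - Q x‖ ≤ ‖Q (Q x) - x‖ := by
  have hgrow : ∀ y, ‖y‖ ≤ ‖y + Q y‖ := fun y => by
    refine le_of_sq_le_sq ?_ (norm_nonneg _)
    nlinarith [@norm_add_sq 𝕜 _ _ _ _ y (Q y), hQ.re_inner_nonneg_right y, sq_nonneg ‖Q y‖]
  calc ‖x - Q x‖ ≤ ‖(x - Q x) + Q (x - Q x)‖ := hgrow _
    _ = ‖Q (Q x) - x‖ := by rw [map_sub, sub_add_sub_cancel, norm_sub_rev]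

theorem exists_opNorm_le_of_norm_inner_le {𝕜 E ι : Type*} [RCLike 𝕜] [NormedAddCommGroup E]
    [InnerProductSpace 𝕜 E] [Fintype ι] (b : OrthonormalBasis ι 𝕜 E) :
    ∃ C > (0 : ℝ), ∀ {S : E →L[𝕜] E} {δ : ℝ}, 0 ≤ δ → (∀ i j, ‖⟪b i, S (b j)⟫_𝕜‖ ≤ δ) →
      ‖S‖ ≤ C * δ := by
  obtain ⟨C, hC, h⟩ := b.toBasis.exists_opNorm_le (F := E)
  refine ⟨C * (√(Fintype.card ι) + 1), by positivity, fun {S δ} hδ hS => ?_⟩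
  rw [mul_assoc]
  refine h (by positivity) fun j => ?_
  rw [b.coe_toBasis]
  calc ‖S (b j)‖ ≤ √(Fintype.card ι) * ⨆ i, ‖⟪b i, S (b j)⟫_𝕜‖ :=
        b.norm_le_card_mul_iSup_norm_inner _
    _ ≤ (√(Fintype.card ι) + 1) * δ := by
        gcongr
        · exact Real.iSup_nonneg fun i => norm_nonneg _
        · exact le_add_of_nonneg_right zero_le_one
        · exact Real.iSup_le (fun i => hS i j) hδ

variable {W K : Type*} [NormedAddCommGroup W] [InnerProductSpace ℂ W] [CompleteSpace W]
  [NormedAddCommGroup K] [InnerProductSpace ℂ K] [CompleteSpace K]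

theorem exists_linearIsometry_comp_sqrt_adjoint_mul_self {T : W →L[ℂ] K}
    (hT : IsUnit (T.adjoint ∘L T)) :
    ∃ V : W →ₗᵢ[ℂ] K, ∀ x, V (CFC.sqrt (T.adjoint ∘L T) x) = T x := by
  set Q := CFC.sqrt (T.adjoint ∘L T)
  have hpos : 0 ≤ T.adjoint ∘L T :=
    (ContinuousLinearMap.nonneg_iff_isPositive _).2
      (ContinuousLinearMap.isPositive_adjoint_comp_self T)
  have hsq : Q * Q = T.adjoint ∘L T := CFC.sqrt_mul_sqrt_self _ hpos
  have hQ : Q.IsPositive := (ContinuousLinearMap.nonneg_iff_isPositive _).1 (CFC.sqrt_nonneg _)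
  have hnorm : ∀ x, ‖T x‖ = ‖Q x‖ := fun x => by
    have h : ⟪T x, T x⟫_ℂ = ⟪Q x, Q x⟫_ℂ := by
      rw [← ContinuousLinearMap.adjoint_inner_right, hQ.isSymmetric.apply_clm]
      exact congrArg (inner ℂ x) (DFunLike.congr_fun hsq x).symm
    rw [@norm_eq_sqrt_re_inner ℂ, h, ← @norm_eq_sqrt_re_inner ℂ]
  obtain ⟨u, hu : ↑u = Q⟩ := (CFC.isUnit_sqrt_iff _ hpos).2 hT
  let R : W →L[ℂ] W := ↑u⁻¹
  have hQR : ∀ x, Q (R x) = x := DFunLike.congr_fun (hu ▸ u.mul_inv : Q * R = 1)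
  have hRQ : ∀ x, R (Q x) = x := DFunLike.congr_fun (hu ▸ u.inv_mul : R * Q = 1)
  exact ⟨⟨(T ∘L R : W →L[ℂ] K), fun x => (hnorm (R x)).trans (congrArg norm (hQR x))⟩,
    fun x => congrArg T (hRQ x)⟩

theorem exists_linearIsometry_near_of_norm_adjoint_mul_self_sub_one_lt {T : W →L[ℂ] K}
    (hT : ‖T.adjoint ∘L T - 1‖ < 1) :
    ∃ V : W →ₗᵢ[ℂ] K, ∀ x, ‖V x - T x‖ ≤ ‖T.adjoint ∘L T - 1‖ * ‖x‖ := by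
  have hunit : IsUnit (T.adjoint ∘L T) := by
    have hlt : ‖(1 : W →L[ℂ] W) - T.adjoint ∘L T‖ < 1 := by rwa [norm_sub_rev]
    simpa using isUnit_one_sub_of_norm_lt_one hlt
  have hpos : 0 ≤ T.adjoint ∘L T :=
    (ContinuousLinearMap.nonneg_iff_isPositive _).2
      (ContinuousLinearMap.isPositive_adjoint_comp_self T)
  obtain ⟨V, hV⟩ := exists_linearIsometry_comp_sqrt_adjoint_mul_self hunit
  set Q := CFC.sqrt (T.adjoint ∘L T)
  have hQ : Q.IsPositive := (ContinuousLinearMap.nonneg_iff_isPositive _).1 (CFC.sqrt_nonneg _)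
  have hsq : Q * Q = T.adjoint ∘L T := CFC.sqrt_mul_sqrt_self _ hpos
  refine ⟨V, fun x => ?_⟩
  calc ‖V x - T x‖ = ‖x - Q x‖ := by rw [← hV, ← map_sub, V.norm_map]
    _ ≤ ‖Q (Q x) - x‖ := norm_sub_apply_le_of_isPositive hQ x
    _ = ‖(T.adjoint ∘L T - 1) x‖ := by rw [← hsq]; rfl
    _ ≤ ‖T.adjoint ∘L T - 1‖ * ‖x‖ := ContinuousLinearMap.le_opNorm _ x

variable (K) in
theorem exists_linearIsometry_near_of_inner_near {ι : Type*} [Fintype ι]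
    (b : OrthonormalBasis ι ℂ W) {η : ℝ} (hη : 0 < η) :
    ∃ δ > 0, ∀ T : W →L[ℂ] K, (∀ i j, ‖⟪T (b i), T (b j)⟫_ℂ - ⟪b i, b j⟫_ℂ‖ ≤ δ) →
      ∃ V : W →ₗᵢ[ℂ] K, ∀ x, ‖V x - T x‖ ≤ η * ‖x‖ := by
  obtain ⟨C, hC, h⟩ := exists_opNorm_le_of_norm_inner_le b
  refine ⟨min η 2⁻¹ / C, by positivity, fun T hT => ?_⟩
  have hnear : ‖T.adjoint ∘L T - 1‖ ≤ min η 2⁻¹ := by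
    refine (h (by positivity) fun i j => ?_).trans_eq (mul_div_cancel₀ _ hC.ne')
    simpa [inner_sub_right, ContinuousLinearMap.adjoint_inner_right] using hT i j
  obtain ⟨V, hV⟩ := exists_linearIsometry_near_of_norm_adjoint_mul_self_sub_one_lt
    ((hnear.trans (min_le_right _ _)).trans_lt (by norm_num))
  exact ⟨V, fun x => (hV x).trans (by gcongr; exact hnear.trans (min_le_left _ _))⟩

end NearIsometry

section AlmostIntertwines

variable {A W K : Type*} [CStarAlgebra A]
  [NormedAddCommGroup W] [InnerProductSpace ℂ W] [CompleteSpace W]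
  [NormedAddCommGroup K] [InnerProductSpace ℂ K] [CompleteSpace K]

/-- The map `T` intertwines `ρ` and `θ` up to an error `ε`, for the algebra elements in `Ω` and the
vectors in `F`. No linearity of `T` is built in, so that the notion applies both to operators and
to bundled isometries. -/
def CRep.AlmostIntertwines (ρ : CRep A W) (θ : CRep A K) (T : W → K) (Ω : Finset A)
    (F : Finset W) (ε : ℝ) : Prop :=
  ∀ a ∈ Ω, ∀ x ∈ F, ‖θ a (T x) - T (ρ a x)‖ < ε

/-- The vector state of `ξ` under `ρ` is a weak-star limit of positive functionals
`a ↦ ⟪θ a z, z⟫`. -/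
def CRep.VectorStateApprox (ρ : CRep A W) (θ : CRep A K) (ξ : W) : Prop :=
  ∀ (Ω : Finset A) (ε : ℝ), 0 < ε → ∃ z : K, ∀ a ∈ Ω, ‖⟪ρ a ξ, ξ⟫_ℂ - ⟪θ a z, z⟫_ℂ‖ < ε

theorem CRep.exists_almostIntertwines_of_near (ρ : CRep A W) (θ : CRep A K) (Ω : Finset A)
    (F : Finset W) {ε : ℝ} (hε : 0 < ε) :
    ∃ η > 0, ∀ T V : W → K, (∀ x, ‖V x - T x‖ ≤ η * ‖x‖) →
      ρ.AlmostIntertwines θ T Ω F (ε / 2) → ρ.AlmostIntertwines θ V Ω F ε := by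
  have hsmall : ∀ᶠ η in 𝓝[>] (0 : ℝ), ∀ a ∈ Ω, ∀ x ∈ F, 2 * (‖a‖ * ‖x‖) * η < ε / 2 := by
    simp only [Filter.eventually_all_finset]
    intro a _ x _
    have h : Tendsto (fun η : ℝ => 2 * (‖a‖ * ‖x‖) * η) (𝓝[>] 0) (𝓝 0) := by
      simpa using ((continuous_const_mul (2 * (‖a‖ * ‖x‖))).tendsto 0).mono_left nhdsWithin_le_nhds
    exact h.eventually_lt_const (half_pos hε)
  obtain ⟨η, hη, hη0⟩ := (hsmall.and eventually_mem_nhdsWithin).exists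
  refine ⟨η, hη0, fun T V hTV hT a ha x hx => ?_⟩
  have hleft : ‖θ a (V x - T x)‖ ≤ ‖a‖ * (η * ‖x‖) :=
    (θ.norm_apply_apply_le a _).trans (by gcongr; exact hTV x)
  have hright : ‖V (ρ a x) - T (ρ a x)‖ ≤ η * (‖a‖ * ‖x‖) :=
    (hTV _).trans (mul_le_mul_of_nonneg_left (ρ.norm_apply_apply_le a x) (le_of_lt hη0))
  have hsplit : θ a (V x) - V (ρ a x) =
      θ a (V x - T x) + (θ a (T x) - T (ρ a x)) - (V (ρ a x) - T (ρ a x)) := by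
    rw [map_sub]; abel
  rw [hsplit]
  linarith [norm_sub_le (θ a (V x - T x) + (θ a (T x) - T (ρ a x))) (V (ρ a x) - T (ρ a x)),
    norm_add_le (θ a (V x - T x)) (θ a (T x) - T (ρ a x)), hη a ha x hx, hT a ha x hx]

namespace CRep.VectorStateApprox

variable {ρ : CRep A W} {θ : CRep A K} {ξ : W}

theorem exists_inner_near (h : ρ.VectorStateApprox θ ξ) (P : Finset (A × A)) {ε : ℝ}
    (hε : 0 < ε) :
    ∃ z : K, ∀ p ∈ P, ‖⟪ρ p.1 ξ, ρ p.2 ξ⟫_ℂ - ⟪θ p.1 z, θ p.2 z⟫_ℂ‖ < ε := by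
  classical
  obtain ⟨z, hz⟩ := h (P.image fun p => star p.2 * p.1) ε hε
  refine ⟨z, fun p hp => ?_⟩
  simpa only [inner_star_mul_apply] using hz _ (Finset.mem_image_of_mem _ hp)

theorem exists_almostIntertwines_clm [FiniteDimensional ℂ W] (h : ρ.VectorStateApprox θ ξ)
    (hξ : Function.Surjective fun a => ρ a ξ) {ι : Type*} [Finite ι] (b : ι → W) {δ : ℝ}
    (hδ : 0 < δ) (Ω : Finset A) (F : Finset W) {ε : ℝ} (hε : 0 < ε) :
    ∃ T : W →L[ℂ] K, (∀ i j, ‖⟪T (b i), T (b j)⟫_ℂ - ⟪b i, b j⟫_ℂ‖ ≤ δ) ∧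
      ρ.AlmostIntertwines θ T Ω F ε := by
  classical
  have := Fintype.ofFinite ι
  let orbit : A →ₗ[ℂ] W := (ContinuousLinearMap.apply ℂ W ξ : (W →L[ℂ] W) →ₗ[ℂ] W) ∘ₗ
    (ρ : A →ₗ[ℂ] (W →L[ℂ] W))
  obtain ⟨s, hs⟩ := orbit.exists_rightInverse_of_surjective (LinearMap.range_eq_top.2 hξ)
  replace hs : ∀ x, ρ (s x) ξ = x := DFunLike.congr_fun hs
  let defect : A → W → A := fun a x => a * s x - s (ρ a x)
  have hdefect : ∀ a x, ρ (defect a x) ξ = 0 := fun a x => by simp [defect, hs]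
  obtain ⟨z, hz⟩ := h.exists_inner_near
    ((Finset.univ.image fun p : ι × ι => (s (b p.1), s (b p.2))) ∪
      (Ω ×ˢ F).image fun p => (defect p.1 p.2, defect p.1 p.2))
    (lt_min hδ (pow_pos hε 2))
  let T : W →ₗ[ℂ] K := (ContinuousLinearMap.apply ℂ K z : (K →L[ℂ] K) →ₗ[ℂ] K) ∘ₗ
    (θ : A →ₗ[ℂ] (K →L[ℂ] K)) ∘ₗ s
  have hT : ∀ x, T x = θ (s x) z := fun _ => rfl
  refine ⟨LinearMap.toContinuousLinearMap T, fun i j => ?_, fun a ha x hx => ?_⟩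
  · have hgram := hz (s (b i), s (b j)) (Finset.mem_union_left _
      (Finset.mem_image.2 ⟨(i, j), Finset.mem_univ _, rfl⟩))
    rw [hs, hs, norm_sub_rev] at hgram
    exact (hgram.trans_le (min_le_left _ _)).le
  · have hsmall := hz (defect a x, defect a x) (Finset.mem_union_right _
      (Finset.mem_image.2 ⟨(a, x), Finset.mk_mem_product ha hx, rfl⟩))
    rw [hdefect, inner_zero_left, zero_sub, norm_neg, inner_self_eq_norm_sq_to_K, norm_pow,
      RCLike.norm_ofReal, abs_norm] at hsmall
    have hdiff : θ a (T x) - T (ρ a x) = θ (defect a x) z := by simp [hT, defect]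
    exact hdiff ▸ lt_of_pow_lt_pow_left₀ 2 hε.le (hsmall.trans_le (min_le_right _ _))

theorem exists_almostIntertwines_linearIsometry [FiniteDimensional ℂ W]
    (h : ρ.VectorStateApprox θ ξ) (hξ : Function.Surjective fun a => ρ a ξ) (Ω : Finset A)
    (F : Finset W) {ε : ℝ} (hε : 0 < ε) :
    ∃ V : W →ₗᵢ[ℂ] K, ρ.AlmostIntertwines θ V Ω F ε := by
  obtain ⟨η, hη, hnear⟩ := ρ.exists_almostIntertwines_of_near θ Ω F hε
  obtain ⟨δ, hδ, hiso⟩ := exists_linearIsometry_near_of_inner_near K (stdOrthonormalBasis ℂ W) hη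
  obtain ⟨T, hgram, hT⟩ :=
    h.exists_almostIntertwines_clm hξ (stdOrthonormalBasis ℂ W) hδ Ω F (half_pos hε)
  obtain ⟨V, hV⟩ := hiso T hgram
  exact ⟨V, hnear T V hV hT⟩

end CRep.VectorStateApprox

theorem CRepPrec.vectorStateApprox {ρ : CRep A W} {θ : CRep A K} (h : CRepPrec ρ θ) {ξ : W}
    (hξ : ‖ξ‖ = 1) : ρ.VectorStateApprox θ ξ := by
  intro Ω ε hε
  have horth : Orthonormal ℂ fun _ : Fin 1 => ξ := ⟨fun _ => hξ, Subsingleton.pairwise⟩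
  obtain ⟨ζ, -, hζ⟩ := h Ω 1 _ horth ε hε
  exact ⟨ζ 0, fun a ha => hζ a ha 0⟩

theorem CRepPrec.exists_almostIntertwines [FiniteDimensional ℂ W] {ρ : CRep A W}
    {θ : CRep A K} (h : CRepPrec ρ θ) (hρ : CRepIrreducible ρ) (Ω : Finset A) (F : Finset W)
    {ε : ℝ} (hε : 0 < ε) : ∃ V : W →ₗᵢ[ℂ] K, ρ.AlmostIntertwines θ V Ω F ε := by
  rcases subsingleton_or_nontrivial W with hW | hW
  · refine ⟨⟨0, fun x => by simp [Subsingleton.elim x 0]⟩, fun a _ x _ => ?_⟩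
    simpa using hε
  · obtain ⟨ξ, hξ⟩ := exists_norm_eq W zero_le_one
    have hξ0 : ξ ≠ 0 := norm_ne_zero_iff.1 (hξ ▸ one_ne_zero)
    exact (h.vectorStateApprox hξ).exists_almostIntertwines_linearIsometry
      (hρ.surjective_apply hξ0) Ω F hε

end AlmostIntertwines

section ApproxWeaklyMixing

instance separableSpace_withLp_prod {p : ENNReal} {α β : Type*} [TopologicalSpace α]
    [TopologicalSpace β] [SeparableSpace α] [SeparableSpace β] :
    SeparableSpace (WithLp p (α × β)) :=
  (WithLp.homeomorphProd p α β).symm.surjective.denseRange.separableSpace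
    (WithLp.homeomorphProd p α β).symm.continuous

theorem norm_le_norm_fst_add_norm_snd {E F : Type*} [SeminormedAddCommGroup E]
    [SeminormedAddCommGroup F] (x : WithLp 2 (E × F)) : ‖x‖ ≤ ‖x.fst‖ + ‖x.snd‖ := by
  refine le_of_sq_le_sq ?_ (by positivity)
  rw [WithLp.prod_norm_sq_eq_of_L2]
  nlinarith [norm_nonneg x.fst, norm_nonneg x.snd]

universe u v w

variable {A : Type u} [CStarAlgebra A]

/-- The representation `ρ` is a limit of restrictions of weakly mixing representations on separable
spaces in `Type w`: each of its finite pieces is almost intertwined with such a representation by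
an isometry. -/
def CRepApproxWeaklyMixing {W : Type v} [NormedAddCommGroup W]
    [InnerProductSpace ℂ W] [CompleteSpace W] (ρ : CRep A W) : Prop :=
  ∀ (Ω : Finset A) (F : Finset W) (ε : ℝ), 0 < ε →
    ∃ (K : Type w) (_ : NormedAddCommGroup K) (_ : InnerProductSpace ℂ K) (_ : CompleteSpace K)
      (_ : SeparableSpace K) (θ : CRep A K), CRepWeaklyMixing θ ∧
        ∃ V : W →ₗᵢ[ℂ] K, ρ.AlmostIntertwines θ V Ω F ε

theorem CRep.AlmostIntertwines.prod {W₁ W₂ K₁ K₂ : Type*}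
    [NormedAddCommGroup W₁] [InnerProductSpace ℂ W₁] [CompleteSpace W₁]
    [NormedAddCommGroup W₂] [InnerProductSpace ℂ W₂] [CompleteSpace W₂]
    [NormedAddCommGroup K₁] [InnerProductSpace ℂ K₁] [CompleteSpace K₁]
    [NormedAddCommGroup K₂] [InnerProductSpace ℂ K₂] [CompleteSpace K₂]
    [DecidableEq W₁] [DecidableEq W₂]
    {ρ₁ : CRep A W₁} {ρ₂ : CRep A W₂} {θ₁ : CRep A K₁} {θ₂ : CRep A K₂}
    {V₁ : W₁ →ₗᵢ[ℂ] K₁} {V₂ : W₂ →ₗᵢ[ℂ] K₂} {Ω : Finset A} {F : Finset (WithLp 2 (W₁ × W₂))}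
    {ε₁ ε₂ : ℝ} (h₁ : ρ₁.AlmostIntertwines θ₁ V₁ Ω (F.image WithLp.fst) ε₁)
    (h₂ : ρ₂.AlmostIntertwines θ₂ V₂ Ω (F.image WithLp.snd) ε₂) :
    (ρ₁.prod ρ₂).AlmostIntertwines (θ₁.prod θ₂) (LinearIsometry.withLpProdMap 2 V₁ V₂) Ω F
      (ε₁ + ε₂) := by
  intro a ha x hx
  exact (norm_le_norm_fst_add_norm_snd _).trans_lt (add_lt_add
    (h₁ a ha _ (Finset.mem_image_of_mem _ hx)) (h₂ a ha _ (Finset.mem_image_of_mem _ hx)))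

namespace CRepApproxWeaklyMixing

theorem prod {W₁ W₂ : Type*} [NormedAddCommGroup W₁] [InnerProductSpace ℂ W₁] [CompleteSpace W₁]
    [NormedAddCommGroup W₂] [InnerProductSpace ℂ W₂] [CompleteSpace W₂]
    {ρ₁ : CRep A W₁} {ρ₂ : CRep A W₂} (h₁ : CRepApproxWeaklyMixing.{u, _, w} ρ₁)
    (h₂ : CRepApproxWeaklyMixing.{u, _, w} ρ₂) :
    CRepApproxWeaklyMixing.{u, _, w} (ρ₁.prod ρ₂) := by
  classical
  intro Ω F ε hε
  obtain ⟨K₁, _, _, _, _, θ₁, hθ₁, V₁, hV₁⟩ := h₁ Ω (F.image WithLp.fst) (ε / 2) (half_pos hε)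
  obtain ⟨K₂, _, _, _, _, θ₂, hθ₂, V₂, hV₂⟩ := h₂ Ω (F.image WithLp.snd) (ε / 2) (half_pos hε)
  refine ⟨WithLp 2 (K₁ × K₂), inferInstance, inferInstance, inferInstance, inferInstance,
    θ₁.prod θ₂, hθ₁.prod hθ₂, LinearIsometry.withLpProdMap 2 V₁ V₂, ?_⟩
  exact add_halves ε ▸ hV₁.prod hV₂

theorem of_conj {W W' : Type*} [NormedAddCommGroup W] [InnerProductSpace ℂ W] [CompleteSpace W]
    [NormedAddCommGroup W'] [InnerProductSpace ℂ W'] [CompleteSpace W']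
    {ρ : CRep A W} {U : W ≃ₗᵢ[ℂ] W'} (h : CRepApproxWeaklyMixing.{u, _, w} (ρ.conj U)) :
    CRepApproxWeaklyMixing.{u, _, w} ρ := by
  classical
  intro Ω F ε hε
  obtain ⟨K, _, _, _, _, θ, hθ, V, hV⟩ := h Ω (F.image U) ε hε
  refine ⟨K, _, _, _, ‹_›, θ, hθ, V.comp U.toLinearIsometry, fun a ha x hx => ?_⟩
  simpa using hV a ha (U x) (Finset.mem_image_of_mem U hx)

theorem of_irreducible
    (hyp : ∀ (n : ℕ) (ρ : CRep A (EuclideanSpace ℂ (Fin n))), CRepIrreducible ρ →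
      ∃ (K : Type w) (_ : NormedAddCommGroup K) (_ : InnerProductSpace ℂ K)
        (_ : CompleteSpace K) (_ : SeparableSpace K)
        (θ : CRep A K), CRepWeaklyMixing θ ∧ CRepPrec ρ θ)
    {W : Type v} [NormedAddCommGroup W] [InnerProductSpace ℂ W] [CompleteSpace W]
    [FiniteDimensional ℂ W] {ρ : CRep A W} (hρ : CRepIrreducible ρ) :
    CRepApproxWeaklyMixing.{u, v, w} ρ := by
  have hconj := hρ.conj (stdOrthonormalBasis ℂ W).repr
  obtain ⟨K, _, _, _, _, θ, hθ, hprec⟩ := hyp _ _ hconj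
  exact of_conj fun Ω F ε hε =>
    ⟨K, _, _, _, ‹_›, θ, hθ, hprec.exists_almostIntertwines hconj Ω F hε⟩

theorem of_finiteDimensional
    (hirr : ∀ (W : Type v) [NormedAddCommGroup W] [InnerProductSpace ℂ W] [CompleteSpace W]
      [FiniteDimensional ℂ W] (ρ : CRep A W), CRepIrreducible ρ →
      CRepApproxWeaklyMixing.{u, v, w} ρ)
    (W : Type v) [NormedAddCommGroup W] [InnerProductSpace ℂ W] [CompleteSpace W]
    [FiniteDimensional ℂ W] (ρ : CRep A W) : CRepApproxWeaklyMixing.{u, v, w} ρ := by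
  induction hn : Module.finrank ℂ W using Nat.strong_induction_on generalizing W with
  | _ n ih =>
    subst hn
    by_cases hρ : CRepIrreducible ρ
    · exact hirr W ρ hρ
    simp only [CRepIrreducible, not_forall, not_or] at hρ
    obtain ⟨M, -, hM : CRepInvariant ρ M, hbot, htop⟩ := hρ
    have hdim := M.finrank_add_finrank_orthogonal
    have hlt : Module.finrank ℂ M < Module.finrank ℂ W := Submodule.finrank_lt htop
    have hpos : 0 < Module.finrank ℂ M :=
      Module.finrank_pos_iff.2 (Submodule.nontrivial_iff_ne_bot.2 hbot)
    refine of_conj (U := M.orthogonalDecomposition) (hM.conj_orthogonalDecomposition ▸ prod ?_ ?_)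
    · exact ih _ hlt M _ rfl
    · exact ih _ (by omega) Mᗮ _ rfl

end CRepApproxWeaklyMixing

end ApproxWeaklyMixing

section UnitaryExtension

variable {𝕜 X H K : Type*} [RCLike 𝕜] [NormedAddCommGroup X] [InnerProductSpace 𝕜 X]
  [NormedAddCommGroup H] [InnerProductSpace 𝕜 H] [NormedAddCommGroup K] [InnerProductSpace 𝕜 K]

theorem countable_of_orthonormal [SeparableSpace H] {ι : Type*} {v : ι → H}
    (hv : Orthonormal 𝕜 v) : Countable ι := by
  have hdist : Pairwise fun i j => 1 ≤ dist (v i) (v j) := by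
    intro i j hij
    have h := @norm_sub_sq 𝕜 _ _ _ _ (v i) (v j)
    rw [hv.1 i, hv.1 j, hv.2 hij, map_zero, ← dist_eq_norm] at h
    nlinarith [dist_nonneg (x := v i) (y := v j)]
  have hdisj : (Set.univ : Set ι).PairwiseDisjoint fun i => Metric.ball (v i) (1 / 2) := by
    intro i _ j _ hij
    exact Metric.ball_disjoint_ball (by linarith [hdist hij])
  exact Set.countable_univ_iff.1 (hdisj.countable_of_isOpen (fun _ _ => Metric.isOpen_ball)
    fun i _ => ⟨v i, Metric.mem_ball_self (by norm_num)⟩)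

theorem not_finiteDimensional_orthogonal (hH : ¬ FiniteDimensional 𝕜 H) (D : Submodule 𝕜 H)
    [FiniteDimensional 𝕜 D] : ¬ FiniteDimensional 𝕜 Dᗮ := by
  intro h
  have htop : FiniteDimensional 𝕜 (D ⊔ Dᗮ : Submodule 𝕜 H) := inferInstance
  rw [Submodule.sup_orthogonal_of_hasOrthogonalProjection] at htop
  exact hH (Module.Finite.equiv (Submodule.topEquiv (R := 𝕜) (M := H)))

theorem exists_linearIsometry_add_of_isOrtho {M N : Submodule 𝕜 H} (h : M ⟂ N) :
    ∃ i : WithLp 2 (M × N) →ₗᵢ[𝕜] H, ∀ x, i x = (x.fst : H) + x.snd := by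
  let i : WithLp 2 (M × N) →ₗ[𝕜] H :=
    (M.subtype.coprod N.subtype) ∘ₗ (WithLp.linearEquiv 2 𝕜 (M × N)).toLinearMap
  have hi : ∀ x, i x = (x.fst : H) + x.snd := fun _ => rfl
  refine ⟨⟨i, fun x => ?_⟩, hi⟩
  have hpyth := norm_add_sq_eq_norm_sq_add_norm_sq_of_inner_eq_zero (𝕜 := 𝕜) _ _
    (h.inner_eq x.fst.2 x.snd.2)
  rw [← sq_eq_sq₀ (norm_nonneg _) (norm_nonneg _), hi, WithLp.prod_norm_sq_eq_of_L2, sq, hpyth]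
  simp only [Submodule.coe_norm, sq]

variable [CompleteSpace H] [CompleteSpace K]

theorem nonempty_linearIsometryEquiv_l2 [SeparableSpace H] (hH : ¬ FiniteDimensional 𝕜 H) :
    Nonempty (H ≃ₗᵢ[𝕜] lp (fun _ : ℕ => 𝕜) 2) := by
  obtain ⟨w, b, -⟩ := exists_hilbertBasis 𝕜 H
  have hcount : Countable w := countable_of_orthonormal b.orthonormal
  have hinf : Infinite w := by
    by_contra hfin
    rw [not_infinite_iff_finite] at hfin
    have := Fintype.ofFinite w
    exact hH b.toOrthonormalBasis.toBasis.finiteDimensional_of_finite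
  obtain ⟨e⟩ := nonempty_equiv_of_countable (α := ℕ) (β := w)
  refine ⟨(HilbertBasis.mk (v := b ∘ e) (b.orthonormal.comp e e.injective) ?_).repr⟩
  rw [e.surjective.range_comp, b.dense_span]

theorem exists_linearIsometryEquiv_comp_eq [SeparableSpace H] [SeparableSpace K]
    [FiniteDimensional 𝕜 X] (hH : ¬ FiniteDimensional 𝕜 H) (hK : ¬ FiniteDimensional 𝕜 K)
    (i : X →ₗᵢ[𝕜] H) (j : X →ₗᵢ[𝕜] K) : ∃ U : H ≃ₗᵢ[𝕜] K, ∀ x, U (i x) = j x := by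
  have := UniformSpace.secondCountable_of_separable H
  have := UniformSpace.secondCountable_of_separable K
  let M : Submodule 𝕜 H := LinearMap.range i.toLinearMap
  let N : Submodule 𝕜 K := LinearMap.range j.toLinearMap
  obtain ⟨J₁⟩ := nonempty_linearIsometryEquiv_l2 (not_finiteDimensional_orthogonal hH M)
  obtain ⟨J₂⟩ := nonempty_linearIsometryEquiv_l2 (not_finiteDimensional_orthogonal hK N)
  refine ⟨(M.orthogonalDecomposition.trans (LinearIsometryEquiv.withLpProdCongr 2
    (i.equivRange.symm.trans j.equivRange) (J₁.trans J₂.symm))).trans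
      N.orthogonalDecomposition.symm, fun x => ?_⟩
  have hx : M.orthogonalDecomposition (i x) = WithLp.toLp 2 (i.equivRange x, 0) := by
    rw [← LinearIsometryEquiv.eq_symm_apply, M.orthogonalDecomposition_symm_apply]
    simp
  simp [hx]

end UnitaryExtension

section Density

variable {A H : Type*} [CStarAlgebra A]
  [NormedAddCommGroup H] [InnerProductSpace ℂ H] [CompleteSpace H]

theorem CRep.exists_conj_near [SeparableSpace H] {K X : Type*}
    [NormedAddCommGroup K] [InnerProductSpace ℂ K] [CompleteSpace K] [SeparableSpace K]
    [NormedAddCommGroup X] [InnerProductSpace ℂ X] [CompleteSpace X]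
    (hH : ¬ FiniteDimensional ℂ H) (hK : ¬ FiniteDimensional ℂ K)
    {σ : CRep A X} {π : CRep A H} {θ : CRep A K} {i : X →ₗᵢ[ℂ] H} {j : X →ₗᵢ[ℂ] K}
    (hi : ∀ a x, i (σ a x) = π a (i x)) {Ω : Finset A} {F : Finset X} {ε : ℝ}
    (hj : σ.AlmostIntertwines θ j Ω F ε) :
    ∃ U : K ≃ₗᵢ[ℂ] H, ∀ a ∈ Ω, ∀ x ∈ F, ‖θ.conj U a (i x) - π a (i x)‖ < ε := by
  classical
  let S : Finset X := F ∪ (Ω ×ˢ F).image fun p => σ p.1 p.2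
  let D : Submodule ℂ X := Submodule.span ℂ S
  obtain ⟨U, hU⟩ := exists_linearIsometryEquiv_comp_eq hH hK
    (i.comp D.subtypeₗᵢ) (j.comp D.subtypeₗᵢ)
  have hUS : ∀ x ∈ S, U (i x) = j x := fun x hx => hU ⟨x, Submodule.subset_span hx⟩
  refine ⟨U.symm, fun a ha x hx => ?_⟩
  have h₁ : U (i x) = j x := hUS x (Finset.mem_union_left _ hx)
  have h₂ : U (π a (i x)) = j (σ a x) := by
    rw [← hi]
    exact hUS _ (Finset.mem_union_right _
      (Finset.mem_image.2 ⟨(a, x), Finset.mk_mem_product ha hx, rfl⟩))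
  rw [← U.norm_map, map_sub, conj_apply, LinearIsometryEquiv.symm_symm,
    LinearIsometryEquiv.apply_symm_apply, h₁, h₂]
  exact hj a ha x hx

/-- The span of all finite-dimensional invariant subspaces. It need not be closed. -/
def CRep.compactPart (π : CRep A H) : Submodule ℂ H :=
  sSup {M : Submodule ℂ H | FiniteDimensional ℂ M ∧ CRepInvariant π M}

namespace CRep

variable (π : CRep A H)

theorem compactPart_invariant : CRepInvariant π π.compactPart :=
  CRepInvariant.sSup fun _ hM => hM.2

theorem weaklyMixing_restrict_compactPart_orthogonal :
    CRepWeaklyMixing (π.restrict π.compactPartᗮ π.compactPart_invariant.orthogonal) := by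
  intro M _ _ hM
  have hinv : CRepInvariant π (M.map π.compactPartᗮ.subtype) := hM.map fun _ _ => rfl
  have hle : M.map π.compactPartᗮ.subtype ≤ π.compactPart := le_sSup ⟨inferInstance, hinv⟩
  rw [eq_bot_iff]
  intro x hx
  exact Subtype.ext (inner_self_eq_zero.1 (x.2 x (hle ⟨x, hx, rfl⟩)))

theorem dense_compactPart_sup_orthogonal :
    Dense ((π.compactPart ⊔ π.compactPartᗮ : Submodule ℂ H) : Set H) := by
  rw [Submodule.dense_iff_topologicalClosure_eq_top, Submodule.topologicalClosure_eq_top_iff,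
    ← Submodule.inf_orthogonal, Submodule.inf_orthogonal_eq_bot]

variable {π}

theorem exists_invariant_ge_of_le_compactPart {D : Submodule ℂ H} [FiniteDimensional ℂ D]
    (hD : D ≤ π.compactPart) :
    ∃ E : Submodule ℂ H, FiniteDimensional ℂ E ∧ CRepInvariant π E ∧ D ≤ E := by
  have hdir : DirectedOn (· ≤ ·)
      {M : Submodule ℂ H | FiniteDimensional ℂ M ∧ CRepInvariant π M} := by
    rintro M ⟨_, hM⟩ N ⟨_, hN⟩
    exact ⟨M ⊔ N, ⟨inferInstance, hM.sup hN⟩, le_sup_left, le_sup_right⟩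
  have hne : {M : Submodule ℂ H | FiniteDimensional ℂ M ∧ CRepInvariant π M}.Nonempty :=
    ⟨⊥, inferInstance, fun a x hx => by simp_all⟩
  have hcompact : IsCompactElement D :=
    (Submodule.fg_iff_compact D).1 (Module.Finite.iff_fg.1 inferInstance)
  obtain ⟨E, ⟨hE, hinv⟩, hDE⟩ :=
    (CompleteLattice.isCompactElement_iff_le_of_directed_sSup_le _ D).1 hcompact _ hne hdir hD
  exact ⟨E, hE, hinv, hDE⟩

theorem exists_invariant_sup_orthogonal_of_subset (hπ : ¬ CRepWeaklyMixing π) {F : Finset H}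
    (hF : (F : Set H) ⊆ (π.compactPart ⊔ π.compactPartᗮ : Submodule ℂ H)) :
    ∃ E : Submodule ℂ H, FiniteDimensional ℂ E ∧ Nontrivial E ∧ CRepInvariant π E ∧
      (F : Set H) ⊆ (π.compactPartᗮ ⊔ E : Submodule ℂ H) := by
  classical
  simp only [CRepWeaklyMixing, not_forall] at hπ
  obtain ⟨M, -, hM, hMinv, hMbot⟩ := hπ
  have hsplit : ∀ x ∈ F, ∃ c ∈ π.compactPart, ∃ l ∈ π.compactPartᗮ, c + l = x := fun x hx =>
    Submodule.mem_sup.1 (hF hx)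
  choose! c hc l hl hcl using hsplit
  have hD : M ⊔ Submodule.span ℂ (F.image c : Set H) ≤ π.compactPart := by
    rw [sup_le_iff, Submodule.span_le, Finset.coe_image, Set.image_subset_iff]
    exact ⟨le_sSup ⟨hM, hMinv⟩, hc⟩
  obtain ⟨E, hE, hEinv, hDE⟩ := exists_invariant_ge_of_le_compactPart hD
  refine ⟨E, hE, ?_, hEinv, fun x hx => ?_⟩
  · exact Submodule.nontrivial_iff_ne_bot.2 (ne_bot_of_le_ne_bot hMbot (le_sup_left.trans hDE))
  · rw [← hcl x hx, add_comm]
    exact Submodule.add_mem_sup (hl x hx) (hDE (le_sup_right (a := M)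
      (Submodule.subset_span (Finset.mem_coe.2 (Finset.mem_image_of_mem c hx)))))

theorem exists_weaklyMixing_near [SeparableSpace H] (hH : ¬ FiniteDimensional ℂ H)
    (happrox : ∀ (E : Submodule ℂ H) [FiniteDimensional ℂ E] (hE : CRepInvariant π E),
      CRepApproxWeaklyMixing (π.restrict E hE)) (Ω : Finset A) {F : Finset H}
    (hF : (F : Set H) ⊆ (π.compactPart ⊔ π.compactPartᗮ : Submodule ℂ H)) {ε : ℝ} (hε : 0 < ε) :
    ∃ τ : CRep A H, CRepWeaklyMixing τ ∧ ∀ a ∈ Ω, ∀ x ∈ F, ‖τ a x - π a x‖ < ε := by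
  classical
  by_cases hπ : CRepWeaklyMixing π
  · exact ⟨π, hπ, fun a _ x _ => by simpa using hε⟩
  obtain ⟨E, _, _, hE, hFE⟩ := exists_invariant_sup_orthogonal_of_subset hπ hF
  let L := π.compactPartᗮ
  let σL := π.restrict L π.compactPart_invariant.orthogonal
  have hEL : L ⟂ E := Submodule.orthogonal_le (le_sSup ⟨inferInstance, hE⟩)
  obtain ⟨i, hi⟩ := exists_linearIsometry_add_of_isOrtho hEL
  let F' : Finset (WithLp 2 (L × E)) := F.preimage i i.injective.injOn
  obtain ⟨K, _, _, _, _, θ, hθ, V, hV⟩ := happrox E hE Ω (F'.image WithLp.snd) (ε / 2) (half_pos hε)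
  have hτ : CRepWeaklyMixing (σL.prod θ) :=
    π.weaklyMixing_restrict_compactPart_orthogonal.prod hθ
  have hid : σL.AlmostIntertwines σL (LinearIsometry.id : L →ₗᵢ[ℂ] L) Ω (F'.image WithLp.fst)
      (ε / 2) := fun a _ x _ => by simpa using hε
  have hj := hid.prod hV
  rw [add_halves] at hj
  have hnt : Nontrivial K := V.injective.nontrivial
  have hnt' : Nontrivial (WithLp 2 (L × K)) := (WithLp.equiv 2 (L × K)).nontrivial
  obtain ⟨U, hU⟩ := exists_conj_near hH hτ.not_finiteDimensional
    (π := π) (i := i) (fun a x => by simp only [hi, map_add]; rfl) hj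
  refine ⟨_, hτ.conj U, fun a ha x hx => ?_⟩
  obtain ⟨y, rfl⟩ : ∃ y, i y = x := by
    obtain ⟨l, hl, e, he, rfl⟩ := Submodule.mem_sup.1 (hFE hx)
    exact ⟨WithLp.toLp 2 (⟨l, hl⟩, ⟨e, he⟩), hi _⟩
  exact hU a ha y (Finset.mem_preimage.2 hx)

end CRep

theorem dense_setOf_crepWeaklyMixing [SeparableSpace H] (hH : ¬ FiniteDimensional ℂ H)
    (happrox : ∀ (E : Submodule ℂ H) [FiniteDimensional ℂ E] (ρ : CRep A E),
      CRepApproxWeaklyMixing ρ) :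
    Dense {π : CRep A H | CRepWeaklyMixing π} := by
  intro π
  refine CRep.mem_closure_of_dense_approx π.dense_compactPart_sup_orthogonal
    fun Ω F hF ε hε => ?_
  exact CRep.exists_weaklyMixing_near hH (fun E _ _ => happrox E _) Ω hF hε

end Density

theorem dense_Gδ_weaklyMixing_of_fd_prec_weaklyMixing_general.{w}
    (A H : Type*) [CStarAlgebra A] [NormedAddCommGroup H] [InnerProductSpace ℂ H]
    [CompleteSpace H] [SeparableSpace H] (hH : ¬ FiniteDimensional ℂ H)
    (hyp : ∀ (n : ℕ) (ρ : CRep A (EuclideanSpace ℂ (Fin n))), CRepIrreducible ρ →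
      ∃ (K : Type w) (_ : NormedAddCommGroup K) (_ : InnerProductSpace ℂ K)
        (_ : CompleteSpace K) (_ : SeparableSpace K)
        (θ : CRep A K), CRepWeaklyMixing θ ∧ CRepPrec ρ θ) :
    Dense {π : CRep A H | CRepWeaklyMixing π} ∧
      IsGδ {π : CRep A H | CRepWeaklyMixing π} := by
  have happrox : ∀ (E : Submodule ℂ H) [FiniteDimensional ℂ E] (ρ : CRep A E),
      CRepApproxWeaklyMixing.{_, _, w} ρ := fun E _ ρ =>
    .of_finiteDimensional (fun _ _ _ _ _ _ => .of_irreducible hyp) E ρ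
  exact ⟨dense_setOf_crepWeaklyMixing hH happrox, isGδ_setOf_crepWeaklyMixing⟩

/-- let `A` be a separable unital C*-algebra and `H` a separable
infinite-dimensional Hilbert space. If every finite-dimensional irreducible unital
representation of `A` is weakly contained (in the sense of `≺`) in some weakly mixing unital
representation of `A` on a separable Hilbert space, then the weakly mixing representations
form a dense Gδ subset of `Rep(A,H)` in the point-strong operator topology. -/
theorem dense_Gδ_weaklyMixing_of_fd_prec_weaklyMixing
    (A H : Type*) [CStarAlgebra A] [TopologicalSpace.SeparableSpace A]
    [NormedAddCommGroup H] [InnerProductSpace ℂ H] [CompleteSpace H]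
    [TopologicalSpace.SeparableSpace H] (hH : ¬ FiniteDimensional ℂ H)
    (hyp : ∀ (n : ℕ) (ρ : CRep A (EuclideanSpace ℂ (Fin n))), CRepIrreducible ρ →
      ∃ (K : Type) (_ : NormedAddCommGroup K) (_ : InnerProductSpace ℂ K)
        (_ : CompleteSpace K) (_ : TopologicalSpace.SeparableSpace K)
        (θ : CRep A K), CRepWeaklyMixing θ ∧ CRepPrec ρ θ) :
    Dense {π : CRep A H | CRepWeaklyMixing π} ∧
      IsGδ {π : CRep A H | CRepWeaklyMixing π} :=
  dense_Gδ_weaklyMixing_of_fd_prec_weaklyMixing_general A H hH hyp
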